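/- With Ω and u as above and p ∈ (3, k+2): u cannot be approximated in the W^{1,p}(Ω) norm by functions that are restrictions to Ω of C^∞ functions on a neighborhood of the closure of Ω. Equivalently, C^∞(cl Ω) is not dense in W^{1,p}(Ω). -/

import Mathlib

open Set MeasureTheory

def memVz (k : ℕ) (x y z : ℝ) : Prop :=
  ((x + 2*z)^2 + y^2 < z^2) ∨ (-2*z < x ∧ x < 2*z ∧ 0 < y ∧ y < z^k) ∨
    ((x - 2*z)^2 + y^2 < z^2)

/-- The domain `Ω ⊂ ℝ³`. -/
def Omg (k : ℕ) : Set (EuclideanSpace ℝ (Fin 3)) :=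
  {q | 0 < q 2 ∧ q 2 < 1 ∧ memVz k (q 0) (q 1) (q 2)}

/-- `g` approximates `u` within `ε` in the `W^{1,p}(Ω)` norm: both the function and
its gradient are `ε`-close in `L^p(Ω)`. -/
noncomputable def W1pClose (u g : EuclideanSpace ℝ (Fin 3) → ℝ) (Ω : Set (EuclideanSpace ℝ (Fin 3)))
    (p : ℝ) (ε : ℝ) : Prop :=
  eLpNorm (Ω.indicator (fun q => u q - g q)) (ENNReal.ofReal p) volume < ENNReal.ofReal ε ∧
  eLpNorm (Ω.indicator (fun q => ‖fderiv ℝ u q - fderiv ℝ g q‖)) (ENNReal.ofReal p) volume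
    < ENNReal.ofReal ε

/-!
Morrey's inequality at the vertex of a cone: integrating the gradient along the rays from the origin
and averaging over a bounded star-shaped set `S` bounds `g 0` by the `W^{1,p}(S)` norm of `g`
as soon as `p` exceeds the dimension `d`, because `t ↦ t^(-d/p)` is then integrable at `0`.
On two cones with vertex `0` on which `u` takes the constant values `1` and `0`, this
forces `g 0` to be close to both values whenever `g` is `W^{1,p}`-close to `u`.
-/

open scoped ENNReal NNReal

section Morrey

variable {E F : Type*} [NormedAddCommGroup E] [NormedSpace ℝ E] [NormedAddCommGroup F]

lemma lintegral_Ioc_rpow_lt_top {r : ℝ} (hr : -1 < r) :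
    ∫⁻ t in Ioc (0 : ℝ) 1, ENNReal.ofReal (t ^ r) < ∞ := by
  have hint : IntervalIntegrable (fun t : ℝ => t ^ r) volume 0 1 :=
    intervalIntegral.intervalIntegrable_rpow' hr
  exact ((intervalIntegrable_iff_integrableOn_Ioc_of_le zero_le_one).1 hint).lintegral_lt_top

lemma neg_one_lt_neg_natCast_div_toReal {d : ℕ} {p : ℝ≥0∞} (hp : d < p) :
    -1 < -(d : ℝ) / p.toReal := by
  rcases eq_or_ne p ∞ with rfl | hp_top
  · simp
  · have hdp : (d : ℝ) < p.toReal := by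
      simpa using (ENNReal.toReal_lt_toReal (by simp) hp_top).2 hp
    rw [lt_div_iff₀ (d.cast_nonneg.trans_lt hdp)]
    linarith

lemma setLIntegral_enorm_le_eLpNorm_mul_measure_rpow {α : Type*} [MeasurableSpace α]
    {μ : Measure α} {S : Set α} {f : α → F} {p : ℝ≥0∞} (hp : 1 ≤ p)
    (hf : AEStronglyMeasurable f (μ.restrict S)) :
    ∫⁻ x in S, ‖f x‖ₑ ∂μ ≤ eLpNorm f p (μ.restrict S) * μ S ^ (1 - 1 / p.toReal) := by
  simpa [eLpNorm_one_eq_lintegral_enorm] using eLpNorm_le_eLpNorm_mul_rpow_measure_univ hp hf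

section Dilation

variable [MeasurableSpace E] [BorelSpace E] [FiniteDimensional ℝ E] {μ : Measure E}
  [μ.IsAddHaarMeasure] {S : Set E} {p : ℝ≥0∞}

lemma eLpNorm_comp_smul (f : E → F) (p : ℝ≥0∞) {t : ℝ} (ht : 0 < t) :
    eLpNorm (fun x => f (t • x)) p μ =
      ENNReal.ofReal (t ^ (-(Module.finrank ℝ E : ℝ) / p.toReal)) * eLpNorm f p μ := by
  have hemb : MeasurableEmbedding fun x : E => t • x :=
    (Homeomorph.smulOfNeZero t ht.ne').measurableEmbedding
  have hpow : 0 < (t ^ Module.finrank ℝ E)⁻¹ := by positivity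
  have hfactor : ((t ^ Module.finrank ℝ E)⁻¹) ^ (1 / p).toReal =
      t ^ (-(Module.finrank ℝ E : ℝ) / p.toReal) := by
    rw [← Real.rpow_natCast, ← Real.rpow_neg ht.le, ← Real.rpow_mul ht.le, one_div,
      ENNReal.toReal_inv, div_eq_mul_inv]
  rw [← Function.comp_def f, ← hemb.eLpNorm_map_measure, Measure.map_addHaar_smul μ ht.ne',
    abs_of_pos hpow, eLpNorm_smul_measure_of_ne_zero (ENNReal.ofReal_pos.2 hpow).ne', smul_eq_mul,
    ENNReal.ofReal_rpow_of_pos hpow, hfactor]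

lemma eLpNorm_restrict_comp_smul_le (hS : StarConvex ℝ 0 S) (hSm : MeasurableSet S)
    (f : E → F) (p : ℝ≥0∞) {t : ℝ} (ht : t ∈ Ioc (0 : ℝ) 1) :
    eLpNorm (fun x => f (t • x)) p (μ.restrict S) ≤
      ENNReal.ofReal (t ^ (-(Module.finrank ℝ E : ℝ) / p.toReal)) *
        eLpNorm f p (μ.restrict S) := by
  rw [← eLpNorm_indicator_eq_eLpNorm_restrict hSm, ← eLpNorm_indicator_eq_eLpNorm_restrict hSm,
    ← eLpNorm_comp_smul _ _ ht.1]
  refine eLpNorm_mono_enorm fun x => ?_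
  by_cases hx : x ∈ S
  · simp [hx, hS.smul_mem hx ht.1.le ht.2]
  · simp [hx]

lemma lintegral_lintegral_enorm_comp_smul_le (hS : StarConvex ℝ 0 S) (hSm : MeasurableSet S)
    (hp : 1 ≤ p) {f : E → F} (hf : ContinuousOn f S) :
    ∫⁻ x in S, (∫⁻ t in Ioc (0 : ℝ) 1, ‖f (t • x)‖ₑ) ∂μ ≤
      (∫⁻ t in Ioc (0 : ℝ) 1, ENNReal.ofReal (t ^ (-(Module.finrank ℝ E : ℝ) / p.toReal))) *
        (eLpNorm f p (μ.restrict S) * μ S ^ (1 - 1 / p.toReal)) := by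
  have hmaps : ∀ t ∈ Ioc (0 : ℝ) 1, MapsTo (fun x => t • x) S S := fun t ht x hx =>
    hS.smul_mem hx ht.1.le ht.2
  have hjoint : AEMeasurable (fun z : E × ℝ => ‖f (z.2 • z.1)‖ₑ)
      ((μ.restrict S).prod (volume.restrict (Ioc 0 1))) := by
    rw [Measure.prod_restrict]
    have hcont : ContinuousOn (fun z : E × ℝ => f (z.2 • z.1)) (S ×ˢ Ioc 0 1) :=
      hf.comp (by fun_prop) fun z hz => hmaps z.2 hz.2 hz.1
    exact hcont.enorm.aemeasurable (hSm.prod measurableSet_Ioc)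
  rw [lintegral_lintegral_swap hjoint, ← lintegral_mul_const'' _ (by fun_prop)]
  refine setLIntegral_mono' measurableSet_Ioc fun t ht => ?_
  have hcont : ContinuousOn (fun x => f (t • x)) S := hf.comp (by fun_prop) (hmaps t ht)
  calc ∫⁻ x in S, ‖f (t • x)‖ₑ ∂μ
      ≤ eLpNorm (fun x => f (t • x)) p (μ.restrict S) * μ S ^ (1 - 1 / p.toReal) :=
        setLIntegral_enorm_le_eLpNorm_mul_measure_rpow hp (hcont.aestronglyMeasurable hSm)
    _ ≤ _ := by
        rw [← mul_assoc]
        gcongr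
        exact eLpNorm_restrict_comp_smul_le hS hSm f p ht

end Dilation

variable [NormedSpace ℝ F]

lemma enorm_sub_le_lintegral_fderiv_smul {g : E → F} {x : E}
    (hg : ∀ t ∈ Icc (0 : ℝ) 1, ContDiffAt ℝ 1 g (t • x)) :
    ‖g x - g 0‖ₑ ≤ (∫⁻ t in Ioc (0 : ℝ) 1, ‖fderiv ℝ g (t • x)‖ₑ) * ‖x‖ₑ := by
  have hray : ContDiff ℝ 1 fun t : ℝ => t • x := by fun_prop
  have hcomp : ContDiffOn ℝ 1 (fun t : ℝ => g (t • x)) (Icc 0 1) := fun t ht =>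
    ((hg t ht).comp t hray.contDiffAt).contDiffWithinAt
  have hderiv : ∀ t ∈ Icc (0 : ℝ) 1, deriv (fun s : ℝ => g (s • x)) t = fderiv ℝ g (t • x) x := by
    intro t ht
    have hsmul : HasDerivAt (fun s : ℝ => s • x) x t := by
      simpa using (hasDerivAt_id t).smul_const x
    exact (((hg t ht).differentiableAt one_ne_zero).hasFDerivAt.comp_hasDerivAt t hsmul).deriv
  calc ‖g x - g 0‖ₑ
      ≤ ∫⁻ t in Icc (0 : ℝ) 1, ‖deriv (fun s : ℝ => g (s • x)) t‖ₑ := by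
        simpa using enorm_sub_le_lintegral_deriv_of_contDiffOn_Icc hcomp zero_le_one
    _ ≤ ∫⁻ t in Icc (0 : ℝ) 1, ‖fderiv ℝ g (t • x)‖ₑ * ‖x‖ₑ :=
        setLIntegral_mono' measurableSet_Icc fun t ht => by
          rw [hderiv t ht]
          exact ContinuousLinearMap.le_opENorm _ _
    _ = (∫⁻ t in Ioc (0 : ℝ) 1, ‖fderiv ℝ g (t • x)‖ₑ) * ‖x‖ₑ := by
        rw [lintegral_mul_const' _ _ enorm_ne_top, restrict_Ioc_eq_restrict_Icc]

variable [MeasurableSpace E] [BorelSpace E] [FiniteDimensional ℝ E] {μ : Measure E}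
  [μ.IsAddHaarMeasure] {S : Set E} {p : ℝ≥0∞}

lemma enorm_apply_zero_mul_measure_le (hS : StarConvex ℝ 0 S) (hSm : MeasurableSet S) {R : ℝ≥0}
    (hR : ∀ x ∈ S, ‖x‖ₑ ≤ R) (hp : 1 ≤ p) {g : E → F} (hg : ∀ x ∈ S, ContDiffAt ℝ 1 g x) :
    ‖g 0‖ₑ * μ S ≤ (eLpNorm g p (μ.restrict S) +
      (∫⁻ t in Ioc (0 : ℝ) 1, ENNReal.ofReal (t ^ (-(Module.finrank ℝ E : ℝ) / p.toReal))) *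
        R * eLpNorm (fderiv ℝ g) p (μ.restrict S)) * μ S ^ (1 - 1 / p.toReal) := by
  have hcont : ContinuousOn g S := fun x hx => (hg x hx).continuousAt.continuousWithinAt
  have hcont' : ContinuousOn (fderiv ℝ g) S := fun x hx =>
    ((hg x hx).continuousAt_fderiv one_ne_zero).continuousWithinAt
  have hpointwise : ∀ x ∈ S,
      ‖g 0‖ₑ ≤ ‖g x‖ₑ + (∫⁻ t in Ioc (0 : ℝ) 1, ‖fderiv ℝ g (t • x)‖ₑ) * R := by
    intro x hx
    calc ‖g 0‖ₑ = ‖g x - (g x - g 0)‖ₑ := by rw [sub_sub_cancel]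
      _ ≤ ‖g x‖ₑ + ‖g x - g 0‖ₑ := enorm_sub_le
      _ ≤ _ := by
        gcongr
        refine (enorm_sub_le_lintegral_fderiv_smul fun t ht =>
          hg _ (hS.smul_mem hx ht.1 ht.2)).trans ?_
        gcongr
        exact hR x hx
  calc ‖g 0‖ₑ * μ S
      = ∫⁻ _ in S, ‖g 0‖ₑ ∂μ := (setLIntegral_const S _).symm
    _ ≤ ∫⁻ x in S, (‖g x‖ₑ + (∫⁻ t in Ioc (0 : ℝ) 1, ‖fderiv ℝ g (t • x)‖ₑ) * R) ∂μ :=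
        setLIntegral_mono' hSm hpointwise
    _ = ∫⁻ x in S, ‖g x‖ₑ ∂μ +
          (∫⁻ x in S, (∫⁻ t in Ioc (0 : ℝ) 1, ‖fderiv ℝ g (t • x)‖ₑ) ∂μ) * R := by
        rw [lintegral_add_left' (hcont.enorm.aemeasurable hSm),
          lintegral_mul_const' _ _ ENNReal.coe_ne_top]
    _ ≤ _ := by
        grw [setLIntegral_enorm_le_eLpNorm_mul_measure_rpow hp (hcont.aestronglyMeasurable hSm),
          lintegral_lintegral_enorm_comp_smul_le hS hSm hp hcont']
        exact le_of_eq (by ring)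

theorem exists_enorm_apply_zero_le_eLpNorm_add_eLpNorm_fderiv [Nontrivial E]
    (hS : StarConvex ℝ 0 S) (hSm : MeasurableSet S) (hSb : Bornology.IsBounded S) (hS₀ : μ S ≠ 0)
    (hp : Module.finrank ℝ E < p) :
    ∃ K : ℝ≥0, ∀ g : E → F, (∀ x ∈ S, ContDiffAt ℝ 1 g x) →
      ‖g 0‖ₑ ≤ K * (eLpNorm g p (μ.restrict S) + eLpNorm (fderiv ℝ g) p (μ.restrict S)) := by
  have hp₁ : 1 ≤ p := le_trans (mod_cast Module.finrank_pos (R := ℝ) (M := E)) hp.le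
  have hS_top : μ S ≠ ∞ := hSb.measure_lt_top.ne
  obtain ⟨R, -, hR⟩ := hSb.exists_pos_norm_le
  have hR' : ∀ x ∈ S, ‖x‖ₑ ≤ R.toNNReal := fun x hx => by
    rw [← ofReal_norm]
    exact ENNReal.ofReal_le_ofReal (hR x hx)
  set A := ∫⁻ t in Ioc (0 : ℝ) 1, ENNReal.ofReal (t ^ (-(Module.finrank ℝ E : ℝ) / p.toReal))
  have hA : A ≠ ∞ := (lintegral_Ioc_rpow_lt_top (neg_one_lt_neg_natCast_div_toReal hp)).ne
  set K : ℝ≥0∞ := (1 + A * R.toNNReal) * μ S ^ (1 - 1 / p.toReal) / μ S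
  have hK : K ≠ ∞ := by
    have hpow : μ S ^ (1 - 1 / p.toReal) ≠ ∞ := by simp [ENNReal.rpow_eq_top_iff, hS₀, hS_top]
    finiteness
  refine ⟨K.toNNReal, fun g hg => ?_⟩
  set N := eLpNorm g p (μ.restrict S)
  set D := eLpNorm (fderiv ℝ g) p (μ.restrict S)
  have hsum : N + A * R.toNNReal * D ≤ (1 + A * R.toNNReal) * (N + D) :=
    calc N + A * R.toNNReal * D
        ≤ (N + D) + A * R.toNNReal * (N + D) := by gcongr <;> simp
      _ = (1 + A * R.toNNReal) * (N + D) := by ring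
  rw [ENNReal.coe_toNNReal hK, ← ENNReal.mul_div_right_comm,
    ENNReal.le_div_iff_mul_le (.inl hS₀) (.inl hS_top), mul_right_comm]
  exact (enorm_apply_zero_mul_measure_le hS hSm hR' hp₁ hg).trans (mul_le_mul_left hsum _)

end Morrey

section StarDomain

variable {E : Type*} [NormedAddCommGroup E] [NormedSpace ℝ E]

/-- A bounded domain star-shaped about the origin. The origin need not belong to `S` but may be a
boundary point, like the vertex of an open cone; this is why star convexity is asked of
`insert 0 S`. -/
structure IsStarDomain (S : Set E) : Prop where
  isOpen : IsOpen S
  nonempty : S.Nonempty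
  isBounded : Bornology.IsBounded S
  starConvex_insert : StarConvex ℝ 0 (insert 0 S)

namespace IsStarDomain

variable {S : Set E}

lemma zero_mem_closure (hS : IsStarDomain S) : 0 ∈ closure S := by
  obtain ⟨x, hx⟩ := hS.nonempty
  by_cases h₀ : (0 : E) ∈ S
  · exact subset_closure h₀
  have hx₀ : x ≠ 0 := ne_of_mem_of_not_mem hx h₀
  have hlim : Filter.Tendsto (fun t : ℝ => t • x) (nhdsWithin 0 (Ioi 0)) (nhds 0) := by
    have hcont : Continuous fun t : ℝ => t • x := by fun_prop
    simpa using (hcont.tendsto 0).mono_left nhdsWithin_le_nhds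
  refine mem_closure_of_tendsto hlim ?_
  filter_upwards [Ioc_mem_nhdsGT (zero_lt_one' ℝ)] with t ht
  exact (hS.starConvex_insert.smul_mem (mem_insert_of_mem 0 hx) ht.1.le ht.2).resolve_left
    (smul_ne_zero ht.1.ne' hx₀)

theorem exists_enorm_apply_zero_le {F : Type*} [NormedAddCommGroup F] [NormedSpace ℝ F]
    [MeasurableSpace E] [BorelSpace E] [FiniteDimensional ℝ E] [Nontrivial E] {μ : Measure E}
    [μ.IsAddHaarMeasure] {p : ℝ≥0∞} (hS : IsStarDomain S) (hp : Module.finrank ℝ E < p) :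
    ∃ K : ℝ≥0, ∀ g : E → F, (∀ x ∈ insert 0 S, ContDiffAt ℝ 1 g x) →
      ‖g 0‖ₑ ≤ K * (eLpNorm g p (μ.restrict S) + eLpNorm (fderiv ℝ g) p (μ.restrict S)) := by
  have hae : μ.restrict (insert 0 S) = μ.restrict S :=
    Measure.restrict_congr_set (insert_ae_eq_self 0 S)
  have hpos : μ (insert 0 S) ≠ 0 :=
    ((hS.isOpen.measure_pos μ hS.nonempty).trans_le (measure_mono (subset_insert 0 S))).ne'
  obtain ⟨K, hK⟩ := exists_enorm_apply_zero_le_eLpNorm_add_eLpNorm_fderiv (F := F)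
    hS.starConvex_insert (hS.isOpen.measurableSet.insert 0) (hS.isBounded.insert 0) hpos hp
  exact ⟨K, hae ▸ hK⟩

end IsStarDomain

end StarDomain

section Approximation

variable {S T Ω : Set (EuclideanSpace ℝ (Fin 3))} {u : EuclideanSpace ℝ (Fin 3) → ℝ} {p : ℝ}

lemma W1pClose.eLpNorm_const_sub_le {g : EuclideanSpace ℝ (Fin 3) → ℝ} {c ε : ℝ}
    (h : W1pClose u g Ω p ε) (hS : MeasurableSet S) (hSΩ : S ⊆ Ω) (hu : EqOn u (fun _ => c) S) :
    eLpNorm (fun q => c - g q) (ENNReal.ofReal p) (volume.restrict S) ≤ ENNReal.ofReal ε := by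
  rw [← eLpNorm_indicator_eq_eLpNorm_restrict hS]
  refine (eLpNorm_mono_enorm fun q => ?_).trans h.1.le
  by_cases hq : q ∈ S
  · simp [hq, hSΩ hq, hu hq]
  · simp [hq]

lemma W1pClose.eLpNorm_fderiv_const_sub_le {g : EuclideanSpace ℝ (Fin 3) → ℝ} {c ε : ℝ}
    (h : W1pClose u g Ω p ε) (hS : IsOpen S) (hSΩ : S ⊆ Ω) (hu : EqOn u (fun _ => c) S) :
    eLpNorm (fderiv ℝ fun q => c - g q) (ENNReal.ofReal p) (volume.restrict S) ≤
      ENNReal.ofReal ε := by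
  rw [← eLpNorm_norm, ← eLpNorm_indicator_eq_eLpNorm_restrict hS.measurableSet]
  refine (eLpNorm_mono_enorm fun q => ?_).trans h.2.le
  by_cases hq : q ∈ S
  · have hu' : fderiv ℝ u q = 0 := by
      rw [(hu.eventuallyEq_of_mem (hS.mem_nhds hq)).fderiv_eq, fderiv_const_apply]
    simp [hq, hSΩ hq, hu', fderiv_const_sub]
  · simp [hq]

lemma IsStarDomain.exists_abs_sub_le_of_w1pClose (hS : IsStarDomain S) (hSΩ : S ⊆ Ω) {c : ℝ}
    (hu : EqOn u (fun _ => c) S) (hp : 3 < p) :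
    ∃ K : ℝ≥0, ∀ (g : EuclideanSpace ℝ (Fin 3) → ℝ) (ε : ℝ), 0 ≤ ε →
      (∀ q ∈ closure Ω, ContDiffAt ℝ 1 g q) → W1pClose u g Ω p ε → |c - g 0| ≤ K * ε := by
  have hdim : (Module.finrank ℝ (EuclideanSpace ℝ (Fin 3)) : ℝ≥0∞) < ENNReal.ofReal p := by
    simpa [ENNReal.lt_ofReal_iff_toReal_lt] using hp
  obtain ⟨K, hK⟩ := hS.exists_enorm_apply_zero_le (F := ℝ) (μ := volume) hdim
  refine ⟨2 * K, fun g ε hε hg hclose => ?_⟩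
  have hvertex := hK (fun q => c - g q) fun q hq =>
    contDiffAt_const.sub <| hg q <| closure_mono hSΩ <|
      insert_subset hS.zero_mem_closure subset_closure hq
  grw [hclose.eLpNorm_const_sub_le hS.isOpen.measurableSet hSΩ hu,
    hclose.eLpNorm_fderiv_const_sub_le hS.isOpen hSΩ hu] at hvertex
  rw [← ENNReal.ofReal_le_ofReal_iff (by positivity), ← Real.norm_eq_abs, ofReal_norm]
  refine hvertex.trans_eq ?_
  rw [ENNReal.ofReal_mul (by positivity), ENNReal.ofReal_coe_nnreal, ENNReal.coe_mul,
    ENNReal.coe_ofNat]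
  ring

theorem not_forall_exists_w1pClose_of_isStarDomain (hS : IsStarDomain S) (hT : IsStarDomain T)
    (hSΩ : S ⊆ Ω) (hTΩ : T ⊆ Ω) {a b : ℝ} (hab : a ≠ b) (huS : EqOn u (fun _ => a) S)
    (huT : EqOn u (fun _ => b) T) (hp : 3 < p) :
    ¬ ∀ ε > (0 : ℝ), ∃ g : EuclideanSpace ℝ (Fin 3) → ℝ,
      (∀ q ∈ closure Ω, ContDiffAt ℝ 1 g q) ∧ W1pClose u g Ω p ε := by
  intro happrox
  obtain ⟨K, hK⟩ := hS.exists_abs_sub_le_of_w1pClose hSΩ huS hp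
  obtain ⟨L, hL⟩ := hT.exists_abs_sub_le_of_w1pClose hTΩ huT hp
  have hdist : 0 < |a - b| := abs_pos.2 (sub_ne_zero.2 hab)
  set ε := |a - b| / (K + L + 1)
  have hε₀ : 0 < ε := div_pos hdist (by positivity)
  obtain ⟨g, hg, hclose⟩ := happrox ε hε₀
  have hle : |a - b| ≤ (K + L) * ε :=
    calc |a - b| ≤ |a - g 0| + |g 0 - b| := abs_sub_le _ _ _
      _ = |a - g 0| + |b - g 0| := by rw [abs_sub_comm (g 0)]
      _ ≤ K * ε + L * ε := add_le_add (hK g ε hε₀.le hg hclose) (hL g ε hε₀.le hg hclose)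
      _ = (K + L) * ε := (add_mul _ _ _).symm
  have heq : (K + L + 1) * ε = |a - b| := mul_div_cancel₀ _ (by positivity)
  linarith

end Approximation

section TruncatedCone

/-- The cone, cut off at height `1`, over the disc of radius `1` about `(a, 0)` in the plane at
height `1`, with vertex the origin; the cones of the paper are `a = -2` for `C₋` and `a = 2`
for `C₊`. -/
def truncatedCone (a : ℝ) : Set (EuclideanSpace ℝ (Fin 3)) :=
  {q | 0 < q 2 ∧ q 2 < 1 ∧ (q 0 - a * q 2) ^ 2 + q 1 ^ 2 < q 2 ^ 2}

variable {a : ℝ}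

lemma abs_sub_lt_of_mem_truncatedCone {q : EuclideanSpace ℝ (Fin 3)} (hq : q ∈ truncatedCone a) :
    |q 0 - a * q 2| < q 2 :=
  abs_lt_of_sq_lt_sq ((le_add_of_nonneg_right (sq_nonneg _)).trans_lt hq.2.2) hq.1.le

lemma abs_div_sub_lt_one_of_mem_truncatedCone {q : EuclideanSpace ℝ (Fin 3)}
    (hq : q ∈ truncatedCone a) : |q 0 / q 2 - a| < 1 := by
  rw [div_sub' hq.1.ne', abs_div, abs_of_pos hq.1, div_lt_one hq.1, mul_comm]
  exact abs_sub_lt_of_mem_truncatedCone hq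

lemma isOpen_truncatedCone : IsOpen (truncatedCone a) := by
  simp only [truncatedCone, ofPred_and]
  refine .inter ?_ (.inter ?_ ?_) <;> exact isOpen_lt (by fun_prop) (by fun_prop)

lemma truncatedCone_nonempty : (truncatedCone a).Nonempty :=
  ⟨!₂[a / 2, 0, 1 / 2], by
    simp only [truncatedCone, mem_ofPred_eq, Matrix.cons_val]
    ring_nf
    norm_num⟩

lemma isBounded_truncatedCone : Bornology.IsBounded (truncatedCone a) := by
  refine isBounded_iff_forall_norm_le.2 ⟨√((1 + |a|) ^ 2 + 1 ^ 2 + 1 ^ 2), fun q hq => ?_⟩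
  have ⟨hpos, hlt, hdisc⟩ := hq
  have h₀ : |q 0| ≤ 1 + |a| :=
    calc |q 0| = |q 0 - a * q 2 + a * q 2| := by rw [sub_add_cancel]
      _ ≤ |q 0 - a * q 2| + |a| * |q 2| := (abs_add_le _ _).trans_eq (by rw [abs_mul])
      _ ≤ 1 + |a| * 1 := by
        gcongr
        · exact ((abs_sub_lt_of_mem_truncatedCone hq).trans hlt).le
        · rw [abs_of_pos hpos]
          exact hlt.le
      _ = 1 + |a| := by rw [mul_one]
  have h₁ : |q 1| ≤ 1 :=
    (abs_lt_of_sq_lt_sq ((le_add_of_nonneg_left (sq_nonneg _)).trans_lt hdisc) hpos.le).le.trans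
      hlt.le
  have h₂ : |q 2| ≤ 1 := by rw [abs_of_pos hpos]; exact hlt.le
  rw [EuclideanSpace.norm_eq, Fin.sum_univ_three]
  simp only [Real.norm_eq_abs]
  gcongr

lemma starConvex_insert_truncatedCone : StarConvex ℝ 0 (insert 0 (truncatedCone a)) := by
  refine starConvex_zero_iff.2 fun q hq t ht₀ ht₁ => ?_
  rcases hq with rfl | ⟨hpos, hlt, hdisc⟩
  · simp
  rcases ht₀.eq_or_lt with rfl | ht
  · simp
  refine Or.inr ⟨?_, ?_, ?_⟩ <;> simp only [PiLp.smul_apply, smul_eq_mul]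
  · positivity
  · exact (mul_le_of_le_one_left hpos.le ht₁).trans_lt hlt
  · calc (t * q 0 - a * (t * q 2)) ^ 2 + (t * q 1) ^ 2
        = t ^ 2 * ((q 0 - a * q 2) ^ 2 + q 1 ^ 2) := by ring
      _ < t ^ 2 * q 2 ^ 2 := by gcongr
      _ = (t * q 2) ^ 2 := by ring

lemma isStarDomain_truncatedCone : IsStarDomain (truncatedCone a) :=
  ⟨isOpen_truncatedCone, truncatedCone_nonempty, isBounded_truncatedCone,
    starConvex_insert_truncatedCone⟩

lemma truncatedCone_neg_two_subset_Omg {k : ℕ} : truncatedCone (-2) ⊆ Omg k :=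
  fun _ ⟨hpos, hlt, hdisc⟩ =>
    ⟨hpos, hlt, .inl <| by simpa only [neg_mul, sub_neg_eq_add] using hdisc⟩

lemma truncatedCone_two_subset_Omg {k : ℕ} : truncatedCone 2 ⊆ Omg k :=
  fun _ ⟨hpos, hlt, hdisc⟩ => ⟨hpos, hlt, .inr <| .inr hdisc⟩

end TruncatedCone

theorem stmt2_general {ψ : ℝ → ℝ} (hone : ∀ t < (1 : ℝ) / 2, ψ t = 1)
    (hzero : ∀ t ≥ (3 : ℝ) / 4, ψ t = 0) (k : ℕ) {p : ℝ} (hp : 3 < p) :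
    ¬ ∀ ε > (0 : ℝ), ∃ g : EuclideanSpace ℝ (Fin 3) → ℝ,
      (∀ q ∈ closure (Omg k), ContDiffAt ℝ 1 g q) ∧
        W1pClose (fun q => ψ (q 0 / q 2)) g (Omg k) p ε := by
  refine not_forall_exists_w1pClose_of_isStarDomain isStarDomain_truncatedCone
    isStarDomain_truncatedCone truncatedCone_neg_two_subset_Omg truncatedCone_two_subset_Omg
    one_ne_zero (fun q hq => hone _ ?_) (fun q hq => hzero _ ?_) hp
  · linarith [(abs_lt.1 (abs_div_sub_lt_one_of_mem_truncatedCone hq)).2]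
  · linarith [(abs_lt.1 (abs_div_sub_lt_one_of_mem_truncatedCone hq)).1]

theorem stmt2 (ψ : ℝ → ℝ) (hψ : ContDiff ℝ (⊤ : ℕ∞) ψ) (hmono : Antitone ψ)
    (hrange : ∀ t, ψ t ∈ Icc (0:ℝ) 1)
    (hone : ∀ t < (1:ℝ)/2, ψ t = 1) (hzero : ∀ t ≥ (3:ℝ)/4, ψ t = 0)
    (k : ℕ) (hk : 2 ≤ k) (p : ℝ) (hp3 : 3 < p) (hpk : p < k + 2) :
    ¬ (∀ ε > (0:ℝ), ∃ (U : Set (EuclideanSpace ℝ (Fin 3)))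
        (g : EuclideanSpace ℝ (Fin 3) → ℝ),
        IsOpen U ∧ closure (Omg k) ⊆ U ∧ ContDiffOn ℝ (⊤ : ℕ∞) g U ∧
        W1pClose (fun q => ψ (q 0 / q 2)) g (Omg k) p ε) := fun happrox =>
  stmt2_general hone hzero k hp3 fun ε hε =>
    let ⟨_, g, hU, hcl, hg, hclose⟩ := happrox ε hε
    ⟨g, fun q hq => (hg.contDiffAt (hU.mem_nhds (hcl hq))).of_le (by simp), hclose⟩
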